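/- Let β < 0 and let C be a non-circular component of G. Then C is A(β)-harmonic (i.e. ρ(A(β)^C) = 1 and, in case C̄∖C ≠ ∅, ρ(A(β)^{C̄∖C}) < 1) if and only if the following three conditions hold: F(μ) < 0 for every loop μ in C̄; ρ(A(β)^C) = 1; and for every component C' of G contained in C̄∖C there exists β' > β with ρ(A(β')^{C'}) = 1. -/

import Mathlib

open Filter Finset

/-- The spectral radius of a real matrix, `ρ(M) = lim_n ‖Mⁿ‖^{1/n}`
(computed with the entrywise ℓ¹-norm, and as a `limsup` so that it is always defined;
it is `0` for the matrix over the empty index type). -/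
noncomputable def specRad {n : Type*} [Fintype n] [DecidableEq n] (M : Matrix n n ℝ) : ℝ :=
  Filter.limsup (fun k : ℕ => (∑ i, ∑ j, |(M ^ k) i j|) ^ ((1 : ℝ) / (k : ℝ))) Filter.atTop

/-- The spectral radius `ρ(B^S)` of the submatrix of `B` obtained by restricting to `S × S`. -/
noncomputable def specRadOn {V : Type*} [Fintype V] (B : Matrix V V ℝ) (S : Set V) : ℝ :=
  letI : Fintype S := (Set.toFinite S).fintype
  letI : DecidableEq S := Classical.decEq _
  specRad (fun i j : S => B i.1 j.1)

variable {V E : Type*}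

/-- Consecutive edges of the list match up: `r(eᵢ) = s(eᵢ₊₁)`. -/
def ChainOK (src rng : E → V) (μ : List E) : Prop :=
  List.Chain' (fun e f => rng e = src f) μ

/-- A loop: a nonempty path `μ = e₁⋯eₙ` with `s(e₁) = r(eₙ)`. -/
def IsLoop (src rng : E → V) (μ : List E) : Prop :=
  ∃ h : μ ≠ [], ChainOK src rng μ ∧ src (μ.head h) = rng (μ.getLast h)

/-- A loop lying in the vertex set `C`. -/
def LoopIn (src rng : E → V) (C : Set V) (μ : List E) : Prop :=
  IsLoop src rng μ ∧ ∀ e ∈ μ, src e ∈ C ∧ rng e ∈ C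

/-- `v ⤳ w`: there is a (possibly length-0) path from `v` to `w`. -/
def GReaches (src rng : E → V) (v w : V) : Prop :=
  v = w ∨ ∃ μ : List E, ∃ h : μ ≠ [],
    ChainOK src rng μ ∧ src (μ.head h) = v ∧ rng (μ.getLast h) = w

/-- The closure of a set of vertices: all vertices that reach it. -/
def GClosure (src rng : E → V) (C : Set V) : Set V :=
  {v | ∃ w ∈ C, GReaches src rng v w}

/-- A component: an equivalence class of `v ∼ w` (mutual reachability) containing a loop. -/
def GIsComponent (src rng : E → V) (C : Set V) : Prop :=
  (∃ v, C = {w | GReaches src rng v w ∧ GReaches src rng w v}) ∧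
  ∃ μ : List E, LoopIn src rng C μ

/-- The property that the loop `μ` witnesses circularity of the component `C`: `μ` is a simple
loop visiting every vertex of `C`, and containing every edge of the graph joining vertices
of `C`. -/
def CircularWitness (src rng : E → V) (C : Set V) (μ : List E) : Prop :=
  LoopIn src rng C μ ∧ (μ.map src).Nodup ∧
  (∀ v ∈ C, v ∈ μ.map src) ∧
  (∀ e : E, src e ∈ C → rng e ∈ C → e ∈ μ)

/-- A circular component: a component containing, up to the choice of starting vertex,
exactly one loop. -/
def IsCircular (src rng : E → V) (C : Set V) : Prop :=
  GIsComponent src rng C ∧ ∃ μ : List E, CircularWitness src rng C μ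

/-- The matrix `A(β)` with entries `A(β)_{vw} = Σ_{e : v → w} e^{-β F(e)}`. -/
noncomputable def Amat [Fintype E] [DecidableEq V] (src rng : E → V) (F : E → ℝ) (β : ℝ) :
    Matrix V V ℝ :=
  fun v w => ∑ e ∈ Finset.univ.filter (fun e => src e = v ∧ rng e = w), Real.exp (-β * F e)

/-- `F` extended to paths: `F(e₁⋯eₙ) = F(e₁) + ⋯ + F(eₙ)`. -/
def Fpath (F : E → ℝ) (μ : List E) : ℝ := (μ.map F).sum

/-!
Everything rests on the Collatz–Wielandt description of the spectral radius of a nonnegative matrix: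
`ρ(B^S) < r` iff some positive vector `x` satisfies `B x < r x` on `S`. Following `x` along a loop
`μ` in `S` gives `e^{-βF(μ)} ≤ ρ(A(β)^S)^{|μ|}`, so `ρ < 1` and `β < 0` force `F(μ) < 0`. If only
`ρ(A(β)^C) ≤ 1` is known, comparing two loops that leave a vertex of `C` by different edges shows
that their weights `e^{-βF}` add up to at most `1`. A loop in `C` with `F ≥ 0` has weight at least
`1`, so it meets no branching and `C` is circular.

If `F < 0` on all loops in `S`, then `F(e) ≤ φ(s(e)) - φ(r(e)) - c` on `S` for a potential `φ` and
some `c > 0`, namely for `φ(v)` the largest value of `F + c` on simple paths in `S` from `v`.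
Conjugation by `e^{(β'-β)φ}` then yields `ρ(A(β)^S) ≤ e^{-(β'-β)c} ρ(A(β')^S)` for `β < β'`.
Conversely, if `β < 0`, `ρ(A(β)^S) < 1` and `S` contains a loop, then `ρ(A(0)^S) ≥ 1`, and the value
`1` is attained on `(β, 0]` by continuity. Finally `A(β)` is block triangular along the classes of
mutual reachability, so `ρ(A(β)^D) < 1` for `D = C̄ ∖ C` can be tested on the components in `D`.
-/

section SpectralRadius

variable {n : Type*} [Fintype n]

/-- The entrywise `ℓ¹`-norm of a real matrix, the norm through which `specRad` is defined. -/
def l1Norm (M : Matrix n n ℝ) : ℝ :=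
  ∑ i, ∑ j, |M i j|

lemma l1Norm_nonneg (M : Matrix n n ℝ) : 0 ≤ l1Norm M :=
  sum_nonneg fun _ _ => sum_nonneg fun _ _ => abs_nonneg _

lemma sum_row_le_l1Norm (M : Matrix n n ℝ) (i : n) : ∑ j, M i j ≤ l1Norm M :=
  (sum_le_sum fun j _ => le_abs_self (M i j)).trans <|
    single_le_sum (f := fun i => ∑ j, |M i j|)
      (fun _ _ => sum_nonneg fun _ _ => abs_nonneg _) (mem_univ i)

lemma l1Norm_mul_le (M N : Matrix n n ℝ) : l1Norm (M * N) ≤ l1Norm M * l1Norm N := by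
  have row_le (l : n) : ∑ j, |N l j| ≤ l1Norm N :=
    single_le_sum (f := fun l => ∑ j, |N l j|)
      (fun _ _ => sum_nonneg fun _ _ => abs_nonneg _) (mem_univ l)
  calc l1Norm (M * N) ≤ ∑ i, ∑ j, ∑ l, |M i l| * |N l j| :=
        sum_le_sum fun i _ => sum_le_sum fun j _ => by
          simpa only [Matrix.mul_apply, abs_mul] using
            abs_sum_le_sum_abs (fun l => M i l * N l j) univ
    _ = ∑ i, ∑ l, |M i l| * ∑ j, |N l j| := by
        simp only [mul_sum]
        exact sum_congr rfl fun i _ => sum_comm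
    _ ≤ ∑ i, ∑ l, |M i l| * l1Norm N := by
        gcongr with i _ l _
        exact row_le l
    _ = l1Norm M * l1Norm N := by simp only [l1Norm, sum_mul]

lemma tendsto_mul_pow_rpow_one_div {K q : ℝ} (hK : 0 < K) (hq : 0 ≤ q) :
    Tendsto (fun k : ℕ => (K * q ^ k) ^ ((1 : ℝ) / (k : ℝ))) atTop (nhds q) := by
  have hroot : Tendsto (fun k : ℕ => K ^ ((1 : ℝ) / (k : ℝ)) * q) atTop (nhds q) := by
    simpa using (tendsto_const_nhds.rpow (tendsto_one_div_atTop_nhds_zero_nat (𝕜 := ℝ))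
      (Or.inl hK.ne')).mul_const q
  refine hroot.congr' ?_
  filter_upwards [eventually_ne_atTop 0] with k hk
  rw [Real.mul_rpow hK.le (by positivity), one_div, Real.pow_rpow_inv_natCast hq hk]

variable [DecidableEq n]

lemma l1Norm_pow_le (M : Matrix n n ℝ) (k : ℕ) :
    l1Norm (M ^ k) ≤ l1Norm (1 : Matrix n n ℝ) * l1Norm M ^ k := by
  induction k with
  | zero => simp
  | succ k ih =>
    rw [pow_succ, pow_succ, ← mul_assoc]
    exact (l1Norm_mul_le _ _).trans (mul_le_mul_of_nonneg_right ih (l1Norm_nonneg M))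

lemma isBoundedUnder_l1Norm_pow_root (M : Matrix n n ℝ) :
    IsBoundedUnder (· ≤ ·) atTop (fun k : ℕ => l1Norm (M ^ k) ^ ((1 : ℝ) / (k : ℝ))) := by
  have hK : 0 < l1Norm (1 : Matrix n n ℝ) + 1 := by linarith [l1Norm_nonneg (1 : Matrix n n ℝ)]
  refine (tendsto_mul_pow_rpow_one_div hK (l1Norm_nonneg M)).isBoundedUnder_le.mono_le
    (Eventually.of_forall fun k => Real.rpow_le_rpow (l1Norm_nonneg _) ?_ (by positivity))
  refine (l1Norm_pow_le M k).trans (mul_le_mul_of_nonneg_right (by linarith) ?_)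
  exact pow_nonneg (l1Norm_nonneg M) k

lemma specRad_nonneg (M : Matrix n n ℝ) : 0 ≤ specRad M :=
  le_limsup_of_frequently_le
    (Frequently.of_forall fun _ => Real.rpow_nonneg (l1Norm_nonneg _) _)
    (isBoundedUnder_l1Norm_pow_root M)

lemma specRad_le_of_l1Norm_pow_le {M : Matrix n n ℝ} {K q : ℝ} (hK : 0 < K) (hq : 0 ≤ q)
    (h : ∀ k, l1Norm (M ^ k) ≤ K * q ^ k) : specRad M ≤ q := by
  have hlim := tendsto_mul_pow_rpow_one_div hK hq
  rw [← hlim.limsup_eq]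
  refine limsup_le_limsup
    (Eventually.of_forall fun k => Real.rpow_le_rpow (l1Norm_nonneg _) (h k) (by positivity))
    (IsBoundedUnder.isCoboundedUnder_le ?_) hlim.isBoundedUnder_le
  exact isBoundedUnder_of ⟨0, fun _ => Real.rpow_nonneg (l1Norm_nonneg _) _⟩

lemma exists_l1Norm_pow_lt {M : Matrix n n ℝ} {r : ℝ} (h : specRad M < r) :
    ∃ N, l1Norm (M ^ N) < r ^ N := by
  obtain ⟨N, (hN : l1Norm (M ^ N) ^ ((1 : ℝ) / (N : ℝ)) < r), hN0⟩ :=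
    ((eventually_lt_of_limsup_lt h (isBoundedUnder_l1Norm_pow_root M)).and
      (eventually_gt_atTop 0)).exists
  have hpow := pow_lt_pow_left₀ hN (Real.rpow_nonneg (l1Norm_nonneg (M ^ N)) _) hN0.ne'
  exact ⟨N, by rwa [one_div, Real.rpow_inv_natCast_pow (l1Norm_nonneg _) hN0.ne'] at hpow⟩

lemma pow_mulVec_le_of_mulVec_le {M : Matrix n n ℝ} (hM : ∀ i j, 0 ≤ M i j) {x : n → ℝ} {q : ℝ}
    (hq : 0 ≤ q) (h : ∀ i, (M.mulVec x) i ≤ q * x i) (k : ℕ) (i : n) :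
    ((M ^ k).mulVec x) i ≤ q ^ k * x i := by
  induction k generalizing i with
  | zero => simp
  | succ k ih =>
    calc ((M ^ (k + 1)).mulVec x) i = ∑ j, M i j * ((M ^ k).mulVec x) j := by
          rw [pow_succ', ← Matrix.mulVec_mulVec]; rfl
      _ ≤ ∑ j, M i j * (q ^ k * x j) :=
          sum_le_sum fun j _ => mul_le_mul_of_nonneg_left (ih j) (hM i j)
      _ = q ^ k * (M.mulVec x) i := by
          simp only [Matrix.mulVec, dotProduct, mul_sum, mul_left_comm]
      _ ≤ q ^ k * (q * x i) := mul_le_mul_of_nonneg_left (h i) (pow_nonneg hq k)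
      _ = q ^ (k + 1) * x i := by ring

lemma specRad_le_of_mulVec_le {M : Matrix n n ℝ} (hM : ∀ i j, 0 ≤ M i j) {x : n → ℝ}
    (hx : ∀ i, 0 < x i) {q : ℝ} (hq : 0 ≤ q) (h : ∀ i, (M.mulVec x) i ≤ q * x i) :
    specRad M ≤ q := by
  have hpow (k : ℕ) (i j : n) : |(M ^ k) i j| ≤ x i / x j * q ^ k := by
    rw [abs_of_nonneg (Matrix.pow_apply_nonneg hM k i j), div_mul_eq_mul_div, le_div_iff₀ (hx j)]
    calc (M ^ k) i j * x j ≤ ((M ^ k).mulVec x) i :=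
          single_le_sum (f := fun l => (M ^ k) i l * x l)
            (fun l _ => mul_nonneg (Matrix.pow_apply_nonneg hM k i l) (hx l).le) (mem_univ j)
      _ ≤ q ^ k * x i := pow_mulVec_le_of_mulVec_le hM hq h k i
      _ = x i * q ^ k := mul_comm _ _
  have hK : 0 ≤ ∑ i, ∑ j, x i / x j :=
    sum_nonneg fun i _ => sum_nonneg fun j _ => (div_pos (hx i) (hx j)).le
  refine specRad_le_of_l1Norm_pow_le (K := ∑ i, ∑ j, x i / x j + 1) (by linarith) hq fun k => ?_
  calc l1Norm (M ^ k) ≤ ∑ i, ∑ j, x i / x j * q ^ k :=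
        sum_le_sum fun i _ => sum_le_sum fun j _ => hpow k i j
    _ = (∑ i, ∑ j, x i / x j) * q ^ k := by simp only [sum_mul]
    _ ≤ (∑ i, ∑ j, x i / x j + 1) * q ^ k := by gcongr; linarith

lemma exists_mulVec_lt_of_specRad_lt {M : Matrix n n ℝ} (hM : ∀ i j, 0 ≤ M i j) {r : ℝ}
    (h : specRad M < r) : ∃ x : n → ℝ, (∀ i, 0 < x i) ∧ ∀ i, (M.mulVec x) i < r * x i := by
  have hr : 0 < r := (specRad_nonneg M).trans_lt h
  obtain ⟨N, hlt⟩ := exists_l1Norm_pow_lt h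
  -- A truncated Neumann series: `x = ∑_{k < N} Pᵏ 1` satisfies `x - P x = 1 - Pᴺ 1 > 0`.
  set P : Matrix n n ℝ := r⁻¹ • M with hP
  have hP0 (k : ℕ) (i j : n) : 0 ≤ (P ^ k) i j :=
    Matrix.pow_apply_nonneg (fun i j => mul_nonneg (inv_pos.2 hr).le (hM i j)) k i j
  have hPN (i : n) : ((P ^ N).mulVec 1) i < 1 := by
    rw [hP, smul_pow, Matrix.smul_mulVec, Pi.smul_apply, smul_eq_mul, inv_pow,
      inv_mul_lt_iff₀ (by positivity), mul_one]
    simpa only [Matrix.mulVec, dotProduct, Pi.one_apply, mul_one] using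
      (sum_row_le_l1Norm (M ^ N) i).trans_lt hlt
  set G : Matrix n n ℝ := ∑ k ∈ range N, P ^ k with hG
  have htel : G.mulVec 1 - P.mulVec (G.mulVec 1) = 1 - (P ^ N).mulVec (1 : n → ℝ) := by
    rw [Matrix.mulVec_mulVec, ← Matrix.sub_mulVec, ← one_sub_mul, hG, mul_neg_geom_sum,
      Matrix.sub_mulVec, Matrix.one_mulVec]
  have hlt_G (i : n) : (P.mulVec (G.mulVec 1)) i < (G.mulVec 1) i := by
    have := congrFun htel i
    simp only [Pi.sub_apply, Pi.one_apply] at this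
    linarith [hPN i]
  have hG0 (i j : n) : 0 ≤ G i j := by
    rw [hG, Matrix.sum_apply]
    exact sum_nonneg fun k _ => hP0 k i j
  have hPG (i : n) : 0 ≤ (P.mulVec (G.mulVec 1)) i :=
    sum_nonneg fun j _ => mul_nonneg (by simpa using hP0 1 i j)
      (sum_nonneg fun l _ => mul_nonneg (hG0 j l) zero_le_one)
  refine ⟨G.mulVec 1, fun i => (hPG i).trans_lt (hlt_G i), fun i => ?_⟩
  simpa only [hP, Matrix.smul_mulVec, Pi.smul_apply, smul_eq_mul, inv_mul_lt_iff₀ hr]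
    using hlt_G i

theorem specRad_lt_iff_exists_mulVec_lt {M : Matrix n n ℝ} (hM : ∀ i j, 0 ≤ M i j) {r : ℝ}
    (hr : 0 < r) :
    specRad M < r ↔ ∃ x : n → ℝ, (∀ i, 0 < x i) ∧ ∀ i, (M.mulVec x) i < r * x i := by
  refine ⟨exists_mulVec_lt_of_specRad_lt hM, fun ⟨x, hx, h⟩ => ?_⟩
  have hnear (i : n) : ∀ᶠ q in nhdsWithin r (Set.Iio r), (M.mulVec x) i ≤ q * x i := by
    have hlim : Tendsto (fun q => q * x i) (nhdsWithin r (Set.Iio r)) (nhds (r * x i)) :=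
      (tendsto_id.mul_const _).mono_left nhdsWithin_le_nhds
    exact (hlim.eventually_const_lt (h i)).mono fun _ => le_of_lt
  obtain ⟨q, ⟨hq, hq0⟩, hqr⟩ := (((eventually_all.2 hnear).and
    (nhdsWithin_le_nhds (lt_mem_nhds hr))).and self_mem_nhdsWithin).exists
  exact (specRad_le_of_mulVec_le hM hx hq0.le hq).trans_lt hqr

end SpectralRadius

section Submatrix

variable [Fintype V]

lemma specRadOn_nonneg (B : Matrix V V ℝ) (S : Set V) : 0 ≤ specRadOn B S :=
  let : Fintype S := (Set.toFinite S).fintype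
  let : DecidableEq S := Classical.decEq _
  specRad_nonneg _

lemma sum_coe_eq_mulVec_indicator (B : Matrix V V ℝ) (S : Set V) [Fintype S] (x : V → ℝ) (v : V) :
    ∑ w : S, B v w * x w = (B.mulVec (S.indicator x)) v := by
  classical
  simp only [Matrix.mulVec, dotProduct, ← Set.indicator_mul_right S]
  rw [sum_indicator_eq_sum_filter]
  exact (sum_subtype (univ.filter (· ∈ S)) (by simp) (fun w => B v w * x w)).symm

lemma mulVec_indicator_eq_zero {B : Matrix V V ℝ} {S : Set V} {v : V} (h : ∀ w ∈ S, B v w = 0)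
    (x : V → ℝ) : (B.mulVec (S.indicator x)) v = 0 := by
  refine sum_eq_zero fun w _ => ?_
  change B v w * S.indicator x w = 0
  by_cases hw : w ∈ S
  · rw [h w hw, zero_mul]
  · rw [Set.indicator_of_notMem hw, mul_zero]

theorem specRadOn_lt_iff {B : Matrix V V ℝ} {S : Set V} (hB : ∀ v w, 0 ≤ B v w) {r : ℝ}
    (hr : 0 < r) :
    specRadOn B S < r ↔
      ∃ x : V → ℝ, (∀ v, 0 < x v) ∧ ∀ v ∈ S, (B.mulVec (S.indicator x)) v < r * x v := by
  classical
  let : Fintype S := (Set.toFinite S).fintype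
  let : DecidableEq S := Classical.decEq _
  refine (specRad_lt_iff_exists_mulVec_lt (M := fun i j : S => B i.1 j.1)
    (fun _ _ => hB _ _) hr).trans ⟨?_, ?_⟩
  · rintro ⟨x, hx, hlt⟩
    let y : V → ℝ := fun v => if hv : v ∈ S then x ⟨v, hv⟩ else 1
    have hy (w : S) : y w = x w := dif_pos w.2
    refine ⟨y, fun v => ?_, fun v hv => ?_⟩
    · by_cases hv : v ∈ S
      · exact (hx ⟨v, hv⟩).trans_eq (hy ⟨v, hv⟩).symm
      · exact one_pos.trans_eq (dif_neg hv : y v = 1).symm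
    · rw [← sum_coe_eq_mulVec_indicator, hy ⟨v, hv⟩]
      have hlt_v : ∑ w : S, B v w * x w < r * x ⟨v, hv⟩ := hlt ⟨v, hv⟩
      simpa only [hy] using hlt_v
  · rintro ⟨x, hx, hlt⟩
    refine ⟨fun v => x v, fun v => hx v, fun v => ?_⟩
    have hlt_v := hlt v v.2
    rwa [← sum_coe_eq_mulVec_indicator] at hlt_v

lemma specRadOn_lt_of_forall_eq_zero {B : Matrix V V ℝ} {S : Set V} (hB : ∀ v w, 0 ≤ B v w)
    (hzero : ∀ v ∈ S, ∀ w ∈ S, B v w = 0) {r : ℝ} (hr : 0 < r) : specRadOn B S < r := by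
  refine (specRadOn_lt_iff hB hr).2 ⟨1, fun _ => one_pos, fun v hv => ?_⟩
  simpa only [mulVec_indicator_eq_zero (hzero v hv), Pi.one_apply, mul_one] using hr

lemma mulVec_mono {B : Matrix V V ℝ} (hB : ∀ v w, 0 ≤ B v w) : Monotone B.mulVec :=
  fun _ _ h v => sum_le_sum fun w _ => mul_le_mul_of_nonneg_left (h w) (hB v w)

lemma specRadOn_mono {B : Matrix V V ℝ} (hB : ∀ v w, 0 ≤ B v w) : Monotone (specRadOn B) := by
  intro S T hST
  refine le_of_forall_gt fun r hr => ?_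
  have hr0 := (specRadOn_nonneg B T).trans_lt hr
  obtain ⟨x, hx, hlt⟩ := (specRadOn_lt_iff hB hr0).1 hr
  exact (specRadOn_lt_iff hB hr0).2 ⟨x, hx, fun v hv => (mulVec_mono hB
    (Set.indicator_le_indicator_of_subset hST fun w => (hx w).le) v).trans_lt (hlt v (hST hv))⟩

lemma specRadOn_le_mul_of_le_conj {B B' : Matrix V V ℝ} {S : Set V} (hB : ∀ v w, 0 ≤ B v w)
    (hB' : ∀ v w, 0 ≤ B' v w) {c : ℝ} (hc : 0 < c) {d : V → ℝ} (hd : ∀ v, 0 < d v)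
    (h : ∀ v ∈ S, ∀ w ∈ S, B v w * d w ≤ c * d v * B' v w) :
    specRadOn B S ≤ c * specRadOn B' S := by
  rw [← div_le_iff₀' hc]
  refine le_of_forall_gt fun r hr => ?_
  have hr0 := (specRadOn_nonneg B' S).trans_lt hr
  rw [div_lt_iff₀' hc]
  obtain ⟨x, hx, hlt⟩ := (specRadOn_lt_iff hB' hr0).1 hr
  refine (specRadOn_lt_iff hB (mul_pos hc hr0)).2
    ⟨fun v => d v * x v, fun v => mul_pos (hd v) (hx v), fun v hv => ?_⟩
  calc (B.mulVec (S.indicator fun v => d v * x v)) v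
      ≤ c * d v * (B'.mulVec (S.indicator x)) v := by
        simp only [Matrix.mulVec, dotProduct, mul_sum]
        refine sum_le_sum fun w _ => ?_
        by_cases hw : w ∈ S
        · simpa only [Set.indicator_of_mem hw, ← mul_assoc] using
            mul_le_mul_of_nonneg_right (h v hv w hw) (hx w).le
        · simp only [Set.indicator_of_notMem hw, mul_zero, le_refl]
    _ < c * d v * (r * x v) := mul_lt_mul_of_pos_left (hlt v hv) (mul_pos hc (hd v))
    _ = c * r * (d v * x v) := by ring

lemma specRadOn_union_lt {B : Matrix V V ℝ} {S T : Set V} (hB : ∀ v w, 0 ≤ B v w) {r : ℝ}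
    (hST : ∀ v ∈ S, ∀ w ∈ T, B v w = 0) (hS : specRadOn B S < r) (hT : specRadOn B T < r) :
    specRadOn B (S ∪ T) < r := by
  classical
  have hr := (specRadOn_nonneg B S).trans_lt hS
  obtain ⟨x, hx, hxS⟩ := (specRadOn_lt_iff hB hr).1 hS
  obtain ⟨y, hy, hyT⟩ := (specRadOn_lt_iff hB hr).1 hT
  -- Weighting `T` by a large `K` absorbs the entries leading from `T` to `S`.
  obtain ⟨K, hK, hK0⟩ : ∃ K : ℝ, (∀ v, v ∈ T → (B.mulVec (S.indicator x)) v <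
      K * (r * y v - (B.mulVec (T.indicator y)) v)) ∧ 0 < K := by
    refine ((eventually_all.2 fun v => ?_).and (eventually_gt_atTop (0 : ℝ))).exists
    refine eventually_imp_distrib_left.2 fun hv => ?_
    exact (tendsto_id.atTop_mul_const (sub_pos.2 (hyT v hv))).eventually_gt_atTop _
  let z : V → ℝ := S.piecewise x (K • y)
  have hz : (S ∪ T).indicator z ≤ S.indicator x + K • T.indicator y := fun v => by
    by_cases hvS : v ∈ S <;> by_cases hvT : v ∈ T <;>
      simp [z, hvS, hvT, mul_nonneg hK0.le (hy v).le]
  have hBz (v : V) : (B.mulVec ((S ∪ T).indicator z)) v ≤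
      (B.mulVec (S.indicator x)) v + K * (B.mulVec (T.indicator y)) v := by
    simpa [Matrix.mulVec_add, Matrix.mulVec_smul] using mulVec_mono hB hz v
  refine (specRadOn_lt_iff hB hr).2 ⟨z, fun v => ?_, fun v hv => (hBz v).trans_lt ?_⟩
  · by_cases hvS : v ∈ S
    · simpa [z, hvS] using hx v
    · simpa [z, hvS] using mul_pos hK0 (hy v)
  by_cases hvS : v ∈ S
  · simpa [z, hvS, mulVec_indicator_eq_zero (hST v hvS)] using hxS v hvS
  · have hlt := hK v (hv.resolve_left hvS)
    simp only [z, Set.piecewise_eq_of_notMem _ _ _ hvS, Pi.smul_apply, smul_eq_mul]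
    linarith

theorem specRadOn_lt_of_forall_fiber {α : Type*} [PartialOrder α] {B : Matrix V V ℝ}
    (hB : ∀ v w, 0 ≤ B v w) {f : V → α} (hf : ∀ v w, B v w ≠ 0 → f w ≤ f v) {r : ℝ} (hr : 0 < r)
    {S : Set V} (h : ∀ v ∈ S, specRadOn B (S ∩ f ⁻¹' {f v}) < r) : specRadOn B S < r := by
  induction S using WellFoundedLT.induction with
  | ind S ih =>
    rcases S.eq_empty_or_nonempty with rfl | hne
    · exact specRadOn_lt_of_forall_eq_zero hB (by simp) hr
    -- No entry leads from the fibre over a minimal value to the rest of `S`.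
    obtain ⟨v, hv⟩ := S.toFinite.exists_minimalFor f S hne
    rw [← Set.inter_union_sdiff S (f ⁻¹' {f v})]
    refine specRadOn_union_lt hB (fun u hu w hw => ?_) (h v hv.1) (ih _ ?_ fun u hu => ?_)
    · by_contra hne0
      have hwv : f w ≤ f v := (hf u w hne0).trans_eq hu.2
      exact hw.2 (hwv.antisymm (hv.2 hw.1 hwv))
    · exact Set.sdiff_ssubset_left_iff.2 ⟨v, hv.1, rfl⟩
    · exact (specRadOn_mono hB (Set.inter_subset_inter_left _ Set.sdiff_subset)).trans_lt (h u hu.1)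

end Submatrix

section Walks

variable {src rng : E → V}

/-- `IsWalk src rng a l b` says that the edge list `l` is a path from `a` to `b`. The empty list is
the path of length `0`, so no case distinction is needed when paths are concatenated. -/
def IsWalk (src rng : E → V) : V → List E → V → Prop
  | a, [], b => a = b
  | a, e :: l, b => src e = a ∧ IsWalk src rng (rng e) l b

lemma isWalk_append {a b : V} {l m : List E} :
    IsWalk src rng a (l ++ m) b ↔ ∃ c, IsWalk src rng a l c ∧ IsWalk src rng c m b := by
  induction l generalizing a with
  | nil => exact ⟨fun h => ⟨a, rfl, h⟩, fun ⟨c, hac, h⟩ => (hac : a = c) ▸ h⟩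
  | cons e l ih => simp only [List.cons_append, IsWalk, ih, and_assoc, exists_and_left]

lemma chainOK_singleton (e : E) : ChainOK src rng [e] :=
  List.isChain_singleton e

lemma chainOK_cons_cons {e f : E} {l : List E} :
    ChainOK src rng (e :: f :: l) ↔ rng e = src f ∧ ChainOK src rng (f :: l) :=
  List.isChain_cons_cons

lemma isWalk_iff {a b : V} {l : List E} (hl : l ≠ []) :
    IsWalk src rng a l b ↔ ChainOK src rng l ∧ src (l.head hl) = a ∧ rng (l.getLast hl) = b := by
  induction l generalizing a with
  | nil => exact absurd rfl hl
  | cons e l ih =>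
    cases l with
    | nil => simp [IsWalk, chainOK_singleton]
    | cons f l =>
      rw [IsWalk, ih (List.cons_ne_nil f l), chainOK_cons_cons, List.getLast_cons_cons]
      simp only [List.head_cons, eq_comm (a := rng e)]
      tauto

lemma isLoop_iff {μ : List E} : IsLoop src rng μ ↔ μ ≠ [] ∧ ∃ a, IsWalk src rng a μ a := by
  constructor
  · rintro ⟨hμ, hchain, hclosed⟩
    exact ⟨hμ, _, (isWalk_iff hμ).2 ⟨hchain, rfl, hclosed.symm⟩⟩
  · rintro ⟨hμ, a, hwalk⟩
    obtain ⟨hchain, hhead, hlast⟩ := (isWalk_iff hμ).1 hwalk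
    exact ⟨hμ, hchain, hhead.trans hlast.symm⟩

lemma gReaches_iff {v w : V} : GReaches src rng v w ↔ ∃ l, IsWalk src rng v l w := by
  constructor
  · rintro (rfl | ⟨μ, hμ, hwalk⟩)
    · exact ⟨[], rfl⟩
    · exact ⟨μ, (isWalk_iff hμ).2 hwalk⟩
  · rintro ⟨l, hwalk⟩
    rcases eq_or_ne l [] with rfl | hl
    · exact Or.inl hwalk
    · exact Or.inr ⟨l, hl, (isWalk_iff hl).1 hwalk⟩

lemma GReaches.trans {u v w : V} (huv : GReaches src rng u v) (hvw : GReaches src rng v w) :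
    GReaches src rng u w := by
  rw [gReaches_iff] at *
  obtain ⟨l, hl⟩ := huv
  obtain ⟨m, hm⟩ := hvw
  exact ⟨l ++ m, isWalk_append.2 ⟨v, hl, hm⟩⟩

lemma gReaches_edge (e : E) : GReaches src rng (src e) (rng e) :=
  gReaches_iff.2 ⟨[e], rfl, rfl⟩

lemma IsWalk.gReaches_of_mem {a b : V} {l : List E} (h : IsWalk src rng a l b) {e : E}
    (he : e ∈ l) : GReaches src rng a (src e) ∧ GReaches src rng (rng e) b := by
  obtain ⟨p, s, rfl⟩ := List.append_of_mem he
  obtain ⟨c, hp, rfl, hs⟩ := isWalk_append.1 h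
  exact ⟨gReaches_iff.2 ⟨p, hp⟩, gReaches_iff.2 ⟨s, hs⟩⟩

lemma IsWalk.rotate {a : V} {p s : List E} {e : E} (h : IsWalk src rng a (p ++ e :: s) a) :
    IsWalk src rng (rng e) (s ++ p) (src e) := by
  obtain ⟨c, hp, rfl, hs⟩ := isWalk_append.1 h
  exact isWalk_append.2 ⟨a, hs, hp⟩

lemma LoopIn.mono {S T : Set V} {μ : List E} (h : LoopIn src rng S μ) (hST : S ⊆ T) :
    LoopIn src rng T μ :=
  ⟨h.1, fun e he => ⟨hST (h.2 e he).1, hST (h.2 e he).2⟩⟩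

lemma IsLoop.rng_mem {μ : List E} (h : IsLoop src rng μ) {e : E} (he : e ∈ μ) :
    rng e ∈ μ.map src := by
  obtain ⟨-, a, hwalk⟩ := isLoop_iff.1 h
  obtain ⟨p, s, rfl⟩ := List.append_of_mem he
  have hrot := hwalk.rotate
  cases hsp : s ++ p with
  | nil =>
    rw [hsp] at hrot
    simp [show rng e = src e from hrot]
  | cons f l =>
    rw [hsp] at hrot
    have hf : f ∈ s ++ p := hsp ▸ List.mem_cons_self
    exact List.mem_map.2 ⟨f, by grind, hrot.1⟩

/-- The class of `v` under mutual reachability. It is a component exactly when it contains a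
loop. -/
def GClass (src rng : E → V) (v : V) : Set V :=
  {w | GReaches src rng v w ∧ GReaches src rng w v}

lemma gClass_eq_of_mem {v w : V} (h : w ∈ GClass src rng v) :
    GClass src rng w = GClass src rng v :=
  Set.ext fun _ => ⟨fun hu => ⟨h.1.trans hu.1, hu.2.trans h.2⟩,
    fun hu => ⟨h.2.trans hu.1, hu.2.trans h.1⟩⟩

lemma GIsComponent.eq_gClass {C : Set V} (hC : GIsComponent src rng C) {v : V} (hv : v ∈ C) :
    C = GClass src rng v := by
  obtain ⟨⟨u, rfl⟩, -⟩ := hC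
  exact (gClass_eq_of_mem hv).symm

lemma gClass_subset_gClosure_sdiff {C : Set V} (hC : GIsComponent src rng C) {v : V}
    (hv : v ∈ GClosure src rng C \ C) : GClass src rng v ⊆ GClosure src rng C \ C := by
  obtain ⟨⟨c, hc, hvc⟩, hvC⟩ := hv
  refine fun w hw => ⟨⟨c, hc, hw.2.trans hvc⟩, fun hwC => hvC ?_⟩
  rw [hC.eq_gClass hwC]
  exact ⟨hw.2, hw.1⟩

lemma exists_isWalk_of_mem_gClass {u v w : V} (hv : v ∈ GClass src rng u)
    (hw : w ∈ GClass src rng u) :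
    ∃ l, IsWalk src rng v l w ∧ ∀ e ∈ l, src e ∈ GClass src rng u ∧ rng e ∈ GClass src rng u := by
  obtain ⟨l, hl⟩ := gReaches_iff.1 (hv.2.trans hw.1)
  refine ⟨l, hl, fun e he => ?_⟩
  obtain ⟨hvs, hrw⟩ := hl.gReaches_of_mem he
  have hsr : GReaches src rng (src e) (rng e) := gReaches_edge e
  exact ⟨⟨hv.1.trans hvs, hsr.trans (hrw.trans hw.2)⟩, ⟨hv.1.trans (hvs.trans hsr), hrw.trans hw.2⟩⟩

lemma LoopIn.exists_gClass {S : Set V} {μ : List E} (h : LoopIn src rng S μ) :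
    ∃ v ∈ S, LoopIn src rng (GClass src rng v) μ := by
  obtain ⟨hμ, a, hwalk⟩ := isLoop_iff.1 h.1
  have hclass (e : E) (he : e ∈ μ) : src e ∈ GClass src rng a ∧ rng e ∈ GClass src rng a := by
    obtain ⟨has, hra⟩ := hwalk.gReaches_of_mem he
    exact ⟨⟨has, (gReaches_edge e).trans hra⟩, ⟨has.trans (gReaches_edge e), hra⟩⟩
  refine ⟨a, ?_, h.1, hclass⟩
  rw [← ((isWalk_iff hμ).1 hwalk).2.1]
  exact (h.2 _ (List.head_mem hμ)).1

lemma LoopIn.of_gClosure {C : Set V} (hC : GIsComponent src rng C) {μ : List E}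
    (h : LoopIn src rng (GClosure src rng C) μ) :
    LoopIn src rng C μ ∨ LoopIn src rng (GClosure src rng C \ C) μ := by
  obtain ⟨v, hv, hμ⟩ := h.exists_gClass
  by_cases hvC : v ∈ C
  · exact Or.inl (hC.eq_gClass hvC ▸ hμ)
  · exact Or.inr (hμ.mono (gClass_subset_gClosure_sdiff hC ⟨hv, hvC⟩))

lemma exists_loopIn_gClass {v : V} {e : E} (hs : src e ∈ GClass src rng v)
    (hr : rng e ∈ GClass src rng v) : ∃ μ, LoopIn src rng (GClass src rng v) μ := by
  obtain ⟨l, hl, hmem⟩ := exists_isWalk_of_mem_gClass hr hs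
  exact ⟨e :: l, isLoop_iff.2 ⟨List.cons_ne_nil _ _, src e, rfl, hl⟩,
    List.forall_mem_cons.2 ⟨⟨hs, hr⟩, hmem⟩⟩

end Walks

section SimpleLoops

variable {src rng : E → V}

lemma IsWalk.exists_simple_loop {a b : V} {l : List E} (h : IsWalk src rng a l b)
    (hl : ¬ (l.map src).Nodup) :
    ∃ p q s, l = p ++ (q ++ s) ∧ q ≠ [] ∧ (q.map src).Nodup ∧
      (∃ c, IsWalk src rng c q c) ∧ IsWalk src rng a (p ++ s) b := by
  induction l generalizing a with
  | nil => exact absurd List.nodup_nil hl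
  | cons e l ih =>
    obtain ⟨rfl, hwalk⟩ := h
    by_cases hnodup : (l.map src).Nodup
    · have hmem : src e ∈ l.map src := by
        by_contra hmem
        exact hl (List.nodup_cons.2 ⟨hmem, hnodup⟩)
      obtain ⟨f, hf, hfe⟩ := List.mem_map.1 hmem
      obtain ⟨q, s, rfl⟩ := List.append_of_mem hf
      obtain ⟨c, hq, rfl, hs⟩ := isWalk_append.1 hwalk
      refine ⟨[], e :: q, f :: s, rfl, List.cons_ne_nil e q, ?_, ⟨src e, rfl, hfe ▸ hq⟩, hfe, hs⟩
      rw [List.map_append, List.map_cons, hfe] at hnodup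
      exact (List.nodup_middle.1 hnodup).sublist (by simp)
    · obtain ⟨p, q, s, rfl, hq, hqn, hqw, hps⟩ := ih hwalk hnodup
      exact ⟨e :: p, q, s, rfl, hq, hqn, hqw, rfl, hps⟩

lemma LoopIn.exists_simple {S : Set V} {μ : List E} (h : LoopIn src rng S μ) :
    ∃ ν, ν ⊆ μ ∧ LoopIn src rng S ν ∧ (ν.map src).Nodup := by
  by_cases hμ : (μ.map src).Nodup
  · exact ⟨μ, List.Subset.refl μ, h, hμ⟩
  obtain ⟨-, a, hwalk⟩ := isLoop_iff.1 h.1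
  obtain ⟨p, q, s, rfl, hq, hqn, hqw, -⟩ := hwalk.exists_simple_loop hμ
  have hsub : q ⊆ p ++ (q ++ s) := fun e he => by simp [he]
  exact ⟨q, hsub, ⟨isLoop_iff.2 ⟨hq, hqw⟩, fun e he => h.2 e (hsub he)⟩, hqn⟩

lemma finite_setOf_map_nodup [Finite E] (f : E → V) : {l : List E | (l.map f).Nodup}.Finite := by
  classical
  have := Fintype.ofFinite E
  have hfin : {l : List E | l.Nodup}.Finite :=
    Set.finite_coe_iff.1 (inferInstanceAs (Finite {l : List E // l.Nodup}))
  exact hfin.subset fun _ => List.Nodup.of_map f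

lemma IsWalk.exists_simple_walk_ge {S : Set V} {G : E → ℝ}
    (hG : ∀ q, LoopIn src rng S q → (q.map src).Nodup → Fpath G q ≤ 0) {a b : V} {l : List E}
    (h : IsWalk src rng a l b) (hl : ∀ e ∈ l, src e ∈ S ∧ rng e ∈ S) :
    ∃ m, IsWalk src rng a m b ∧ (∀ e ∈ m, src e ∈ S ∧ rng e ∈ S) ∧ (m.map src).Nodup ∧
      Fpath G l ≤ Fpath G m := by
  induction hn : l.length using Nat.strong_induction_on generalizing l with
  | _ n ih =>
    by_cases hnodup : (l.map src).Nodup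
    · exact ⟨l, h, hl, hnodup, le_rfl⟩
    obtain ⟨p, q, s, rfl, hq, hqn, hqw, hps⟩ := h.exists_simple_loop hnodup
    have hlen : (p ++ s).length < n := by
      have := List.length_pos_of_ne_nil hq
      simp only [List.length_append] at hn ⊢
      omega
    obtain ⟨m, hm, hmS, hmn, hle⟩ := ih _ hlen hps (by grind) rfl
    have hq0 : Fpath G q ≤ 0 := hG q ⟨isLoop_iff.2 ⟨hq, hqw⟩, by grind⟩ hqn
    refine ⟨m, hm, hmS, hmn, le_trans ?_ hle⟩
    simp only [Fpath, List.map_append, List.sum_append] at hq0 ⊢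
    linarith

lemma exists_potential [Finite E] {S : Set V} {G : E → ℝ}
    (hG : ∀ q, LoopIn src rng S q → (q.map src).Nodup → Fpath G q ≤ 0) :
    ∃ φ : V → ℝ, ∀ e, src e ∈ S → rng e ∈ S → G e + φ (rng e) ≤ φ (src e) := by
  let walks (v : V) : Set (List E) :=
    {l | (∃ b, IsWalk src rng v l b) ∧ (∀ e ∈ l, src e ∈ S ∧ rng e ∈ S) ∧ (l.map src).Nodup}
  have hmax (v : V) : ∃ l ∈ walks v, ∀ m ∈ walks v, Fpath G m ≤ Fpath G l :=
    Set.exists_max_image _ _ ((finite_setOf_map_nodup src).subset fun _ hl => hl.2.2)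
      ⟨[], ⟨v, rfl⟩, by simp, by simp⟩
  choose best hbest hle using hmax
  refine ⟨fun v => Fpath G (best v), fun e hs hr => ?_⟩
  obtain ⟨⟨b, hb⟩, hbS, -⟩ := hbest (rng e)
  have hwalk : IsWalk src rng (src e) (e :: best (rng e)) b := ⟨rfl, hb⟩
  obtain ⟨m, hm, hmS, hmn, hem⟩ :=
    hwalk.exists_simple_walk_ge hG (List.forall_mem_cons.2 ⟨⟨hs, hr⟩, hbS⟩)
  calc G e + Fpath G (best (rng e)) = Fpath G (e :: best (rng e)) := by simp [Fpath]
    _ ≤ Fpath G m := hem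
    _ ≤ Fpath G (best (src e)) := hle (src e) m ⟨⟨b, hm⟩, hmS, hmn⟩

theorem exists_strict_potential [Finite E] {S : Set V} {F : E → ℝ}
    (hF : ∀ μ, LoopIn src rng S μ → Fpath F μ < 0) :
    ∃ c > 0, ∃ φ : V → ℝ, ∀ e, src e ∈ S → rng e ∈ S → F e + c + φ (rng e) ≤ φ (src e) := by
  have hsmall : ∀ᶠ c : ℝ in nhdsWithin 0 (Set.Ioi 0), ∀ q ∈ {q : List E | (q.map src).Nodup},
      LoopIn src rng S q → Fpath F q + q.length * c < 0 := by
    refine (eventually_all_finite (finite_setOf_map_nodup src)).2 fun q _ => ?_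
    refine eventually_imp_distrib_left.2 fun hq => nhdsWithin_le_nhds ?_
    have hcont : Continuous fun c : ℝ => Fpath F q + q.length * c := by fun_prop
    exact (hcont.tendsto 0).eventually_lt_const (by simpa using hF q hq)
  obtain ⟨c, hc, hc0⟩ := (hsmall.and self_mem_nhdsWithin).exists
  refine ⟨c, hc0, exists_potential fun q hq hqn => ?_⟩
  simpa [Fpath, List.sum_map_add] using (hc q hqn hq).le

end SimpleLoops

section Circularity

variable {src rng : E → V}

lemma IsWalk.mem_of_forall_rng_mem {T : Set V} {a b : V} {l : List E} (h : IsWalk src rng a l b)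
    (ha : a ∈ T) (hT : ∀ f ∈ l, src f ∈ T → rng f ∈ T) : b ∈ T := by
  induction l generalizing a with
  | nil => exact (show a = b from h) ▸ ha
  | cons f l ih =>
    obtain ⟨rfl, hl⟩ := h
    obtain ⟨hf, hT⟩ := List.forall_mem_cons.1 hT
    exact ih hl (hf ha) hT

lemma exists_circularWitness {v : V} {μ : List E} (hμ : LoopIn src rng (GClass src rng v) μ)
    (hout : ∀ e ∈ μ, ∀ f, src f = src e → rng f ∈ GClass src rng v → f = e) :
    ∃ ν, CircularWitness src rng (GClass src rng v) ν := by
  obtain ⟨ν, hνμ, hν, hnodup⟩ := hμ.exists_simple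
  have hedge (f : E) (hf : src f ∈ ν.map src) (hr : rng f ∈ GClass src rng v) : f ∈ ν := by
    obtain ⟨e, he, hef⟩ := List.mem_map.1 hf
    exact hout e (hνμ he) f hef.symm hr ▸ he
  have hvertex (w : V) (hw : w ∈ GClass src rng v) : w ∈ ν.map src := by
    obtain ⟨e, he⟩ := List.exists_mem_of_ne_nil ν (isLoop_iff.1 hν.1).1
    obtain ⟨l, hl, hlC⟩ := exists_isWalk_of_mem_gClass (hν.2 e he).1 hw
    exact hl.mem_of_forall_rng_mem (T := {u | u ∈ ν.map src}) (List.mem_map_of_mem he)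
      fun f hf hs => hν.1.rng_mem (hedge f hs (hlC f hf).2)
  exact ⟨ν, hν, hnodup, hvertex, fun f hs hr => hedge f (hvertex _ hs) hr⟩

end Circularity

lemma exp_Fpath_cons (F : E → ℝ) (β : ℝ) (e : E) (l : List E) :
    Real.exp (-β * Fpath F (e :: l)) = Real.exp (-β * F e) * Real.exp (-β * Fpath F l) := by
  rw [← Real.exp_add, ← mul_add, Fpath, List.map_cons, List.sum_cons, Fpath]

section EdgeMatrix

variable [DecidableEq V] [Fintype E] {src rng : E → V} {F : E → ℝ} {β : ℝ}

lemma Amat_nonneg (v w : V) : 0 ≤ Amat src rng F β v w :=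
  sum_nonneg fun _ _ => (Real.exp_pos _).le

lemma exists_edge_of_Amat_ne_zero {v w : V} (h : Amat src rng F β v w ≠ 0) :
    ∃ e, src e = v ∧ rng e = w := by
  obtain ⟨e, he, -⟩ := exists_ne_zero_of_sum_ne_zero h
  exact ⟨e, (mem_filter.1 he).2⟩

variable [Fintype V] {S : Set V}

lemma Amat_mulVec (x : V → ℝ) (v : V) :
    ((Amat src rng F β).mulVec x) v =
      ∑ e ∈ univ.filter (fun e => src e = v), Real.exp (-β * F e) * x (rng e) := by
  rw [← sum_fiberwise (univ.filter fun e => src e = v) rng]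
  refine sum_congr rfl fun w _ => ?_
  rw [filter_filter]
  change (∑ e ∈ _, _) * x w = _
  rw [sum_mul]
  exact sum_congr rfl fun e he => by rw [(mem_filter.1 he).2.2]

lemma sum_edges_le_Amat_mulVec {x : V → ℝ} (hx : ∀ v, 0 ≤ x v) {v : V} {T : Finset E}
    (hT : ∀ e ∈ T, src e = v ∧ rng e ∈ S) :
    ∑ e ∈ T, Real.exp (-β * F e) * x (rng e) ≤
      ((Amat src rng F β).mulVec (S.indicator x)) v := by
  rw [Amat_mulVec]
  calc ∑ e ∈ T, Real.exp (-β * F e) * x (rng e)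
      = ∑ e ∈ T, Real.exp (-β * F e) * S.indicator x (rng e) :=
        sum_congr rfl fun e he => by rw [Set.indicator_of_mem (hT e he).2]
    _ ≤ _ := sum_le_sum_of_subset_of_nonneg
        (fun e he => mem_filter.2 ⟨mem_univ e, (hT e he).1⟩)
        fun e _ _ => mul_nonneg (Real.exp_pos _).le (Set.indicator_nonneg (fun w _ => hx w) _)

lemma IsWalk.exp_mul_le {x : V → ℝ} (hx : ∀ v, 0 ≤ x v) {r : ℝ} (hr : 0 ≤ r)
    (h : ∀ v ∈ S, ((Amat src rng F β).mulVec (S.indicator x)) v ≤ r * x v) {a b : V} {l : List E}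
    (hl : IsWalk src rng a l b) (hlS : ∀ e ∈ l, src e ∈ S ∧ rng e ∈ S) :
    Real.exp (-β * Fpath F l) * x b ≤ r ^ l.length * x a := by
  induction l generalizing a with
  | nil => simp [Fpath, show a = b from hl]
  | cons e l ih =>
    obtain ⟨rfl, hwalk⟩ := hl
    obtain ⟨⟨hs, hr'⟩, hlS⟩ := List.forall_mem_cons.1 hlS
    have hedge : Real.exp (-β * F e) * x (rng e) ≤ r * x (src e) := by
      simpa using (sum_edges_le_Amat_mulVec hx (T := {e}) (by simpa using hr')).trans (h _ hs)
    calc Real.exp (-β * Fpath F (e :: l)) * x b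
        = Real.exp (-β * F e) * (Real.exp (-β * Fpath F l) * x b) := by
          rw [exp_Fpath_cons, mul_assoc]
      _ ≤ Real.exp (-β * F e) * (r ^ l.length * x (rng e)) :=
          mul_le_mul_of_nonneg_left (ih hwalk hlS) (Real.exp_pos _).le
      _ = r ^ l.length * (Real.exp (-β * F e) * x (rng e)) := by ring
      _ ≤ r ^ l.length * (r * x (src e)) := mul_le_mul_of_nonneg_left hedge (pow_nonneg hr _)
      _ = r ^ (e :: l).length * x (src e) := by rw [List.length_cons]; ring

theorem LoopIn.exp_le_specRadOn_pow {μ : List E} (hμ : LoopIn src rng S μ) :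
    Real.exp (-β * Fpath F μ) ≤ specRadOn (Amat src rng F β) S ^ μ.length := by
  obtain ⟨-, a, hwalk⟩ := isLoop_iff.1 hμ.1
  refine ge_of_tendsto (x := nhdsWithin _ (Set.Ioi (specRadOn (Amat src rng F β) S)))
    ((continuous_pow μ.length).continuousWithinAt.tendsto) ?_
  filter_upwards [self_mem_nhdsWithin] with r (hr : _ < r)
  have hr0 := (specRadOn_nonneg _ _).trans_lt hr
  obtain ⟨x, hx, hlt⟩ := (specRadOn_lt_iff Amat_nonneg hr0).1 hr
  exact le_of_mul_le_mul_right
    (hwalk.exp_mul_le (fun v => (hx v).le) hr0.le (fun v hv => (hlt v hv).le) hμ.2) (hx a)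

lemma LoopIn.Fpath_neg_of_specRadOn_lt_one (hβ : β < 0) {μ : List E} (hμ : LoopIn src rng S μ)
    (hρ : specRadOn (Amat src rng F β) S < 1) : Fpath F μ < 0 := by
  have hlt : Real.exp (-β * Fpath F μ) < 1 := hμ.exp_le_specRadOn_pow.trans_lt <|
    pow_lt_one₀ (specRadOn_nonneg _ _) hρ (List.length_pos_of_ne_nil (isLoop_iff.1 hμ.1).1).ne'
  exact neg_of_mul_neg_right (Real.exp_lt_one_iff.1 hlt) (neg_pos.2 hβ).le

lemma LoopIn.one_le_specRadOn_zero {μ : List E} (hμ : LoopIn src rng S μ) :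
    1 ≤ specRadOn (Amat src rng F 0) S := by
  by_contra! hlt
  have hpow := pow_lt_one₀ (specRadOn_nonneg _ _) hlt
    (List.length_pos_of_ne_nil (isLoop_iff.1 hμ.1).1).ne'
  have hexp := hμ.exp_le_specRadOn_pow (F := F) (β := 0)
  rw [neg_zero, zero_mul, Real.exp_zero] at hexp
  exact hpow.not_ge hexp

lemma LoopIn.exp_div_pow_mul_le {x : V → ℝ} (hx : ∀ v, 0 ≤ x v) {r : ℝ} (hr : 0 < r)
    (h : ∀ v ∈ S, ((Amat src rng F β).mulVec (S.indicator x)) v ≤ r * x v) {e : E} {l : List E}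
    (hl : LoopIn src rng S (e :: l)) :
    Real.exp (-β * Fpath F (e :: l)) / r ^ l.length * x (src e) ≤
      Real.exp (-β * F e) * x (rng e) := by
  obtain ⟨-, a, rfl, hwalk⟩ := isLoop_iff.1 hl.1
  rw [exp_Fpath_cons, mul_div_assoc, mul_assoc, div_mul_eq_mul_div]
  refine mul_le_mul_of_nonneg_left ((div_le_iff₀' (pow_pos hr _)).2 ?_) (Real.exp_pos _).le
  exact hwalk.exp_mul_le hx hr.le h fun d hd => hl.2 d (List.mem_cons_of_mem _ hd)

-- The loops leave their common vertex by different edges, hence contribute separately to the same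
-- row of the matrix, as in Kraft's inequality for two words of a prefix code.
lemma exp_div_pow_add_exp_div_pow_lt {r : ℝ} (hρ : specRadOn (Amat src rng F β) S < r) {e f : E}
    (hef : e ≠ f) (hsrc : src e = src f) {l m : List E} (he : LoopIn src rng S (e :: l))
    (hf : LoopIn src rng S (f :: m)) :
    Real.exp (-β * Fpath F (e :: l)) / r ^ l.length +
      Real.exp (-β * Fpath F (f :: m)) / r ^ m.length < r := by
  classical
  have hr := (specRadOn_nonneg _ _).trans_lt hρ
  obtain ⟨x, hx, hlt⟩ := (specRadOn_lt_iff Amat_nonneg hr).1 hρ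
  have hx0 (v : V) : 0 ≤ x v := (hx v).le
  have hle := fun v hv => (hlt v hv).le
  obtain ⟨hes, her⟩ := he.2 e List.mem_cons_self
  have hfr : rng f ∈ S := (hf.2 f List.mem_cons_self).2
  have hrow : ∑ d ∈ {e, f}, Real.exp (-β * F d) * x (rng d) ≤
      ((Amat src rng F β).mulVec (S.indicator x)) (src e) :=
    sum_edges_le_Amat_mulVec hx0 (by simp [hsrc, her, hfr])
  rw [sum_pair hef] at hrow
  refine lt_of_mul_lt_mul_right ?_ (hx0 (src e))
  rw [add_mul]
  exact ((add_le_add (he.exp_div_pow_mul_le hx0 hr hle)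
    (hsrc ▸ hf.exp_div_pow_mul_le hx0 hr hle)).trans hrow).trans_lt (hlt _ hes)

theorem exp_Fpath_add_exp_Fpath_le_one (hρ : specRadOn (Amat src rng F β) S ≤ 1) {e f : E}
    (hef : e ≠ f) (hsrc : src e = src f) {l m : List E} (he : LoopIn src rng S (e :: l))
    (hf : LoopIn src rng S (f :: m)) :
    Real.exp (-β * Fpath F (e :: l)) + Real.exp (-β * Fpath F (f :: m)) ≤ 1 := by
  have hcont : ContinuousAt (fun r : ℝ => Real.exp (-β * Fpath F (e :: l)) / r ^ l.length +
      Real.exp (-β * Fpath F (f :: m)) / r ^ m.length) 1 := by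
    fun_prop (disch := simp)
  have hle := le_of_tendsto_of_tendsto (b := nhdsWithin 1 (Set.Ioi 1))
    (hcont.tendsto.mono_left nhdsWithin_le_nhds) (tendsto_id.mono_left nhdsWithin_le_nhds) <|
      eventually_mem_nhdsWithin.mono fun r (hr : 1 < r) =>
        (exp_div_pow_add_exp_div_pow_lt (hρ.trans_lt hr) hef hsrc he hf).le
  simpa only [one_pow, div_one] using hle

lemma eq_of_src_eq_of_Fpath_nonneg (hβ : β ≤ 0) {v : V}
    (hρ : specRadOn (Amat src rng F β) (GClass src rng v) ≤ 1) {μ : List E}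
    (hμ : LoopIn src rng (GClass src rng v) μ) (hF : 0 ≤ Fpath F μ) {e f : E} (he : e ∈ μ)
    (hsrc : src f = src e) (hf : rng f ∈ GClass src rng v) : f = e := by
  by_contra hfe
  obtain ⟨-, a, hwalk⟩ := isLoop_iff.1 hμ.1
  obtain ⟨p, s, rfl⟩ := List.append_of_mem he
  have hs : src f ∈ GClass src rng v := hsrc ▸ (hμ.2 e he).1
  obtain ⟨m, hm, hmC⟩ := exists_isWalk_of_mem_gClass hf hs
  have hloop : LoopIn src rng (GClass src rng v) (e :: (s ++ p)) :=
    ⟨isLoop_iff.2 ⟨List.cons_ne_nil _ _, src e, rfl, hwalk.rotate⟩, fun d hd => hμ.2 d (by grind)⟩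
  have hloop' : LoopIn src rng (GClass src rng v) (f :: m) :=
    ⟨isLoop_iff.2 ⟨List.cons_ne_nil _ _, src f, rfl, hm⟩, List.forall_mem_cons.2 ⟨⟨hs, hf⟩, hmC⟩⟩
  have hweight : 1 ≤ Real.exp (-β * Fpath F (e :: (s ++ p))) := by
    have hFeq : Fpath F (e :: (s ++ p)) = Fpath F (p ++ e :: s) := by
      simp only [Fpath, List.map_cons, List.map_append, List.sum_cons, List.sum_append]
      ring
    rw [hFeq]
    exact Real.one_le_exp (mul_nonneg (neg_nonneg.2 hβ) hF)
  linarith [exp_Fpath_add_exp_Fpath_le_one hρ (Ne.symm hfe) hsrc.symm hloop hloop',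
    Real.exp_pos (-β * Fpath F (f :: m))]

theorem Fpath_neg_of_not_isCircular (hβ : β ≤ 0) {C : Set V} (hC : GIsComponent src rng C)
    (hnc : ¬ IsCircular src rng C) (hρ : specRadOn (Amat src rng F β) C ≤ 1) {μ : List E}
    (hμ : LoopIn src rng C μ) : Fpath F μ < 0 := by
  by_contra! hF
  obtain ⟨v, rfl⟩ : ∃ v, C = GClass src rng v := hC.1
  exact hnc ⟨hC, exists_circularWitness hμ fun e he f hsrc hf =>
    eq_of_src_eq_of_Fpath_nonneg hβ hρ hμ hF he hsrc hf⟩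

end EdgeMatrix

section Temperature

variable [Fintype V] [DecidableEq V] [Fintype E] {src rng : E → V} {F : E → ℝ} {S : Set V}

lemma specRadOn_Amat_le_exp_mul {β β' k : ℝ} {g : V → ℝ}
    (h : ∀ e, src e ∈ S → rng e ∈ S → -β * F e + g (rng e) ≤ k + g (src e) + -β' * F e) :
    specRadOn (Amat src rng F β) S ≤ Real.exp k * specRadOn (Amat src rng F β') S := by
  refine specRadOn_le_mul_of_le_conj Amat_nonneg Amat_nonneg (Real.exp_pos k)
    (d := fun v => Real.exp (g v)) (fun v => Real.exp_pos _) fun v hv w hw => ?_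
  simp only [Amat, sum_mul, mul_sum, ← Real.exp_add]
  refine sum_le_sum fun e he => Real.exp_le_exp.2 ?_
  obtain ⟨-, rfl, rfl⟩ := mem_filter.1 he
  exact h e hv hw

lemma continuous_of_le_exp_mul {f : ℝ → ℝ} {M : ℝ}
    (h : ∀ x y, f x ≤ Real.exp (M * |x - y|) * f y) : Continuous f := by
  refine continuous_iff_continuousAt.2 fun y => ?_
  have hexp (K : ℝ) : Tendsto (fun x => Real.exp (K * |x - y|) * f y) (nhds y) (nhds (f y)) := by
    have hcont : Continuous fun x => Real.exp (K * |x - y|) * f y := by fun_prop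
    simpa using hcont.tendsto y
  refine tendsto_of_tendsto_of_tendsto_of_le_of_le (hexp (-M)) (hexp M) (fun x => ?_)
    (fun x => h x y)
  rw [neg_mul, Real.exp_neg, inv_mul_le_iff₀ (Real.exp_pos _), abs_sub_comm]
  exact h y x

lemma continuous_specRadOn_Amat :
    Continuous fun β => specRadOn (Amat src rng F β) S := by
  refine continuous_of_le_exp_mul (M := ∑ e, |F e|) fun β β' => ?_
  refine specRadOn_Amat_le_exp_mul (g := 0) fun e _ _ => ?_
  have hle : (β' - β) * F e ≤ (∑ e, |F e|) * |β - β'| := by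
    calc (β' - β) * F e ≤ |β' - β| * |F e| := (le_abs_self _).trans_eq (abs_mul _ _)
      _ ≤ |β' - β| * ∑ e, |F e| := by
          gcongr
          exact single_le_sum (f := fun e => |F e|) (fun _ _ => abs_nonneg _) (mem_univ e)
      _ = (∑ e, |F e|) * |β - β'| := by rw [abs_sub_comm, mul_comm]
  simp only [Pi.zero_apply]
  linarith

theorem LoopIn.exists_specRadOn_eq_one {β : ℝ} (hβ : β < 0) {μ : List E}
    (hμ : LoopIn src rng S μ) (hρ : specRadOn (Amat src rng F β) S < 1) :
    ∃ β', β < β' ∧ specRadOn (Amat src rng F β') S = 1 := by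
  obtain ⟨β', hβ', hone⟩ := intermediate_value_Ioc hβ.le continuous_specRadOn_Amat.continuousOn
    ⟨hρ, hμ.one_le_specRadOn_zero⟩
  exact ⟨β', hβ'.1, hone⟩

theorem specRadOn_Amat_lt {β β' : ℝ} (hββ' : β < β')
    (hF : ∀ μ, LoopIn src rng S μ → Fpath F μ < 0)
    (hpos : 0 < specRadOn (Amat src rng F β') S) :
    specRadOn (Amat src rng F β) S < specRadOn (Amat src rng F β') S := by
  obtain ⟨c, hc, φ, hφ⟩ := exists_strict_potential hF
  have hδ : 0 < β' - β := sub_pos.2 hββ'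
  have hle : specRadOn (Amat src rng F β) S ≤
      Real.exp (-((β' - β) * c)) * specRadOn (Amat src rng F β') S := by
    refine specRadOn_Amat_le_exp_mul (g := fun v => (β' - β) * φ v) fun e hs hr => ?_
    linarith [mul_le_mul_of_nonneg_left (hφ e hs hr) hδ.le]
  refine hle.trans_lt (mul_lt_of_lt_one_left hpos (Real.exp_lt_one_iff.2 ?_))
  exact neg_neg_of_pos (mul_pos hδ hc)

end Temperature

section Components

variable [Fintype V] [DecidableEq V] [Fintype E] {src rng : E → V} {F : E → ℝ} {β : ℝ}

lemma specRadOn_lt_of_forall_gClass {D : Set V} {r : ℝ} (hr : 0 < r)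
    (h : ∀ v ∈ D, specRadOn (Amat src rng F β) (GClass src rng v) < r) :
    specRadOn (Amat src rng F β) D < r := by
  refine specRadOn_lt_of_forall_fiber Amat_nonneg (f := fun v => {w | GReaches src rng v w})
    (fun v w hvw => ?_) hr fun v hv => (specRadOn_mono Amat_nonneg ?_).trans_lt (h v hv)
  · obtain ⟨e, rfl, rfl⟩ := exists_edge_of_Amat_ne_zero hvw
    exact fun u hu => (gReaches_edge e).trans hu
  · rintro w ⟨-, hw⟩
    have hiff (u : V) : GReaches src rng w u ↔ GReaches src rng v u := Set.ext_iff.1 hw u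
    exact ⟨(hiff w).1 (Or.inl rfl), (hiff v).2 (Or.inl rfl)⟩

theorem specRadOn_lt_of_forall_component {D : Set V} {r : ℝ} (hr : 0 < r)
    (h : ∀ v ∈ D, GIsComponent src rng (GClass src rng v) →
      specRadOn (Amat src rng F β) (GClass src rng v) < r) :
    specRadOn (Amat src rng F β) D < r := by
  refine specRadOn_lt_of_forall_gClass hr fun v hv => ?_
  by_cases hloop : ∃ μ, LoopIn src rng (GClass src rng v) μ
  · exact h v hv ⟨⟨v, rfl⟩, hloop⟩
  · refine specRadOn_lt_of_forall_eq_zero Amat_nonneg (fun u hu w hw => ?_) hr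
    by_contra hne
    obtain ⟨e, rfl, rfl⟩ := exists_edge_of_Amat_ne_zero hne
    exact hloop (exists_loopIn_gClass hu hw)

end Components

/-- For `β < 0` and a non-circular component `C`: `C` is `A(β)`-harmonic iff all loops in
`C̄` have `F < 0`, `ρ(A(β)^C) = 1`, and every component `C' ⊆ C̄ ∖ C` satisfies
`ρ(A(β')^{C'}) = 1` for some `β' > β`. -/
theorem isAharmonic_iff_neg_noncircular {V E : Type*} [Fintype V] [DecidableEq V] [Fintype E]
    (src rng : E → V) (F : E → ℝ)
    (β : ℝ) (hβ : β < 0)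
    (C : Set V) (hC : GIsComponent src rng C) (hnc : ¬ IsCircular src rng C) :
    (specRadOn (Amat src rng F β) C = 1 ∧
      ((GClosure src rng C \ C).Nonempty →
        specRadOn (Amat src rng F β) (GClosure src rng C \ C) < 1)) ↔
    ((∀ μ : List E, LoopIn src rng (GClosure src rng C) μ → Fpath F μ < 0) ∧
      specRadOn (Amat src rng F β) C = 1 ∧
      (∀ C' : Set V, GIsComponent src rng C' → C' ⊆ GClosure src rng C \ C →
        ∃ β' : ℝ, β < β' ∧ specRadOn (Amat src rng F β') C' = 1)) := by
  constructor
  · rintro ⟨hone, hdiff⟩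
    have hlt : specRadOn (Amat src rng F β) (GClosure src rng C \ C) < 1 := by
      rcases (GClosure src rng C \ C).eq_empty_or_nonempty with hempty | hne
      · exact specRadOn_lt_of_forall_eq_zero Amat_nonneg (by simp [hempty]) one_pos
      · exact hdiff hne
    refine ⟨fun μ hμ => ?_, hone, fun C' hC' hsub => ?_⟩
    · rcases hμ.of_gClosure hC with hμC | hμD
      · exact Fpath_neg_of_not_isCircular hβ.le hC hnc hone.le hμC
      · exact hμD.Fpath_neg_of_specRadOn_lt_one hβ hlt
    · obtain ⟨μ, hμ⟩ := hC'.2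
      exact hμ.exists_specRadOn_eq_one hβ ((specRadOn_mono Amat_nonneg hsub).trans_lt hlt)
  · rintro ⟨hneg, hone, hcomp⟩
    refine ⟨hone, fun _ => specRadOn_lt_of_forall_component one_pos fun v hv hv' => ?_⟩
    have hsub := gClass_subset_gClosure_sdiff hC hv
    obtain ⟨β', hββ', hone'⟩ := hcomp _ hv' hsub
    rw [← hone']
    exact specRadOn_Amat_lt hββ' (fun μ hμ => hneg μ (hμ.mono (hsub.trans Set.sdiff_subset)))
      (hone' ▸ one_pos)
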